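/- Suppose n ≥ 1 and r = 2. Then for every function h in C_b^{1,2}([0,∞)), |E[h(F_2)] − χ²_{(1)}h| ≤ (1/n)·(69 + 43/n)·(‖h'‖ + ‖h''‖). -/

import Mathlib

open MeasureTheory Finset Real

noncomputable section

instance instMSPerm (r : ℕ) : MeasurableSpace (Equiv.Perm (Fin r)) := ⊤

/-- The joint law of `n` independent uniformly random permutations of `{1, …, r}`:
the uniform probability measure on the finite product space. -/
def friedmanMeasure (n r : ℕ) : Measure (Fin n → Equiv.Perm (Fin r)) :=
  (PMF.uniformOfFintype (Fin n → Equiv.Perm (Fin r))).toMeasure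

/-- `ρ_i(j) = π_i(j) - (r+1)/2`, where `π_i(j) ∈ {1, …, r}` is the rank assigned by the
`i`-th permutation to treatment `j` (a permutation of `Fin r` assigns values in `{0, …, r-1}`,
hence the `+ 1`). -/
def rho (n r : ℕ) (i : Fin n) (j : Fin r) (ω : Fin n → Equiv.Perm (Fin r)) : ℝ :=
  ((ω i j : ℕ) : ℝ) + 1 - ((r : ℝ) + 1) / 2

/-- `S_j = (√12/√(r(r+1)n)) ∑_{i=1}^n ρ_i(j)`. -/
def Sstat (n r : ℕ) (j : Fin r) (ω : Fin n → Equiv.Perm (Fin r)) : ℝ :=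
  Real.sqrt 12 / Real.sqrt ((r : ℝ) * ((r : ℝ) + 1) * (n : ℝ)) * ∑ i, rho n r i j ω

/-- Friedman's statistic `F_r = ∑_{j=1}^r S_j²`. -/
def friedman (n r : ℕ) (ω : Fin n → Equiv.Perm (Fin r)) : ℝ :=
  ∑ j, (Sstat n r j ω) ^ 2

/-- The chi-square distribution with `p` degrees of freedom: the Gamma distribution
with shape `p/2` and rate `1/2`. -/
def chiSq (p : ℕ) : Measure ℝ := ProbabilityTheory.gammaMeasure ((p : ℝ) / 2) (1 / 2)

end

lemma abs_trapezoid_sub_le {f f₁ f₂ f₃ : ℝ → ℝ} (hf : ∀ x, HasDerivAt f (f₁ x) x)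
    (hf₁ : ∀ x, HasDerivAt f₁ (f₂ x) x) (hf₂ : ∀ x, HasDerivAt f₂ (f₃ x) x) {a v L : ℝ}
    (ha : 0 ≤ a) (hL : ∀ u, |u - v| ≤ a → |f₃ u| ≤ L) :
    |a * (f₁ (v + a) + f₁ (v - a)) - (f (v + a) - f (v - a))| ≤ 2 * a ^ 3 * L := by
  have hL0 : 0 ≤ L := (abs_nonneg _).trans (hL v (by simpa using ha))
  have hlip (s : ℝ) (hs : s ∈ Set.Icc 0 a) : |f₂ (v + s) - f₂ (v - s)| ≤ L * (2 * s) := by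
    have h := (convex_Icc (v - a) (v + a)).norm_image_sub_le_of_norm_hasDerivWithin_le
      (fun x _ => (hf₂ x).hasDerivWithinAt)
      (fun x hx => hL x (abs_le.2 ⟨by linarith [hx.1], by linarith [hx.2]⟩))
      (x := v - s) (y := v + s) ⟨by linarith [hs.2], by linarith [hs.1]⟩
      ⟨by linarith [hs.1], by linarith [hs.2]⟩
    have e : v + s - (v - s) = 2 * s := by ring
    rwa [Real.norm_eq_abs, Real.norm_eq_abs, e, abs_of_nonneg (by linarith [hs.1] : 0 ≤ 2 * s)]
      at h
  have hder (s : ℝ) : HasDerivAt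
      (fun s => s * (f₁ (v + s) + f₁ (v - s)) - (f (v + s) - f (v - s)))
      (s * (f₂ (v + s) - f₂ (v - s))) s := by
    have h1 := (hf (v + s)).comp_const_add v s
    have h2 := (hf (v - s)).comp_const_sub v s
    have h3 := (hf₁ (v + s)).comp_const_add v s
    have h4 := (hf₁ (v - s)).comp_const_sub v s
    convert! ((hasDerivAt_id' s).mul (h3.add h4)).sub (h1.sub h2) using 1
    simp only [Pi.add_apply]
    ring
  have h := (convex_Icc 0 a).norm_image_sub_le_of_norm_hasDerivWithin_le
    (C := 2 * a ^ 2 * L) (fun s _ => (hder s).hasDerivWithinAt) (fun s hs => by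
      rw [Real.norm_eq_abs, abs_mul, abs_of_nonneg hs.1]
      calc s * |f₂ (v + s) - f₂ (v - s)| ≤ s * (L * (2 * s)) :=
            mul_le_mul_of_nonneg_left (hlip s hs) hs.1
        _ = 2 * s ^ 2 * L := by ring
        _ ≤ 2 * a ^ 2 * L := by have := hs.1; have := hs.2; gcongr)
    (Set.left_mem_Icc.2 ha) (Set.right_mem_Icc.2 ha)
  simp only [Real.norm_eq_abs, sub_zero, zero_mul, add_zero, sub_self, abs_of_nonneg ha] at h
  linarith

section SignFlip

variable {Ω ι : Type*} [Fintype ι] [DecidableEq ι] {e : ι → Ω → ℝ}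
  {σ : ι → Equiv.Perm Ω}

lemma sum_apply_flip (hσ : ∀ i j ω, e j (σ i ω) = if j = i then -e j ω else e j ω)
    (i : ι) (ω : Ω) : ∑ j, e j (σ i ω) = ∑ j, e j ω - 2 * e i ω := by
  have h (j : ι) : e j (σ i ω) = e j ω - if j = i then 2 * e j ω else 0 := by
    rw [hσ]; split_ifs <;> ring
  simp [h, Finset.sum_sub_distrib]

variable [Fintype Ω]

lemma sum_comp_sum_sign (he : ∀ i ω, e i ω = 1 ∨ e i ω = -1)
    (hσ : ∀ i j ω, e j (σ i ω) = if j = i then -e j ω else e j ω) (F : ℝ → ℝ) (i : ι) :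
    ∑ ω, F (∑ j, e j ω) =
      ∑ ω, (F (∑ j, e j ω - e i ω + 1) + F (∑ j, e j ω - e i ω - 1)) / 2 := by
  have h := Equiv.sum_comp (σ i) fun ω => F (∑ j, e j ω)
  simp only [sum_apply_flip hσ] at h
  have h2 : ∑ ω, (F (∑ j, e j ω - e i ω + 1) + F (∑ j, e j ω - e i ω - 1)) =
      ∑ ω, (F (∑ j, e j ω) + F (∑ j, e j ω - 2 * e i ω)) := by
    refine Finset.sum_congr rfl fun ω _ => ?_
    rcases he i ω with h | h <;> rw [h] <;> ring_nf
  rw [← Finset.sum_div, h2, Finset.sum_add_distrib, h]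
  ring

lemma sum_mul_comp_sum_sign (he : ∀ i ω, e i ω = 1 ∨ e i ω = -1)
    (hσ : ∀ i j ω, e j (σ i ω) = if j = i then -e j ω else e j ω) (F : ℝ → ℝ) :
    ∑ ω, (∑ j, e j ω) * F (∑ j, e j ω) =
      ∑ ω, ∑ i, (F (∑ j, e j ω - e i ω + 1) - F (∑ j, e j ω - e i ω - 1)) / 2 := by
  rw [Finset.sum_comm]
  simp_rw [Finset.sum_mul]
  rw [Finset.sum_comm]
  refine Finset.sum_congr rfl fun i _ => ?_
  have h := Equiv.sum_comp (σ i) fun ω => e i ω * F (∑ j, e j ω)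
  simp only [sum_apply_flip hσ] at h
  simp only [hσ, if_true] at h
  have h2 : ∑ ω, (F (∑ j, e j ω - e i ω + 1) - F (∑ j, e j ω - e i ω - 1)) =
      ∑ ω, (e i ω * F (∑ j, e j ω) + -e i ω * F (∑ j, e j ω - 2 * e i ω)) := by
    refine Finset.sum_congr rfl fun ω _ => ?_
    rcases he i ω with h | h <;> rw [h] <;> ring_nf
  rw [← Finset.sum_div, h2, Finset.sum_add_distrib, h]
  ring

lemma sum_sq_sum_sign (he : ∀ i ω, e i ω = 1 ∨ e i ω = -1)
    (hσ : ∀ i j ω, e j (σ i ω) = if j = i then -e j ω else e j ω) :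
    ∑ ω, (∑ j, e j ω) ^ 2 = Fintype.card Ω * Fintype.card ι := by
  have h := sum_mul_comp_sum_sign he hσ id
  have h2 (x : ℝ) : (x + 1 - (x - 1)) / 2 = 1 := by ring
  simpa [h2, ← pow_two] using h

lemma abs_sum_stein_le (he : ∀ i ω, e i ω = 1 ∨ e i ω = -1)
    (hσ : ∀ i j ω, e j (σ i ω) = if j = i then -e j ω else e j ω)
    {f f₁ f₂ f₃ : ℝ → ℝ} (hf : ∀ x, HasDerivAt f (f₁ x) x)
    (hf₁ : ∀ x, HasDerivAt f₁ (f₂ x) x) (hf₂ : ∀ x, HasDerivAt f₂ (f₃ x) x) {A B a : ℝ}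
    (hB : 0 ≤ B) (hf₃ : ∀ x, |f₃ x| ≤ A + B * x ^ 2) (ha : 0 < a)
    (han : a ^ 2 * Fintype.card ι = 1) :
    |∑ ω, (f₁ (a * ∑ j, e j ω) - a * (∑ j, e j ω) * f (a * ∑ j, e j ω))|
      ≤ Fintype.card Ω * (a ^ 2 * (A + B * (3 + 6 * a ^ 2))) := by
  set T : Ω → ℝ := fun ω => ∑ j, e j ω with hT
  have h1 : ∑ ω, f₁ (a * T ω) = ∑ ω, ∑ i, a ^ 2 *
      ((f₁ (a * (T ω - e i ω + 1)) + f₁ (a * (T ω - e i ω - 1))) / 2) := by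
    rw [Finset.sum_comm]
    simp_rw [← Finset.mul_sum]
    have h (i : ι) := sum_comp_sum_sign he hσ (fun x => f₁ (a * x)) i
    simp only [hT, ← h]
    rw [Finset.sum_const, Finset.card_univ, nsmul_eq_mul, ← mul_assoc, han,
      one_mul]
  have h2 := sum_mul_comp_sum_sign he hσ (fun x => f (a * x))
  have h3 : ∑ ω, (f₁ (a * T ω) - a * T ω * f (a * T ω)) = ∑ ω, ∑ i, a / 2 *
      (a * (f₁ (a * (T ω - e i ω) + a) + f₁ (a * (T ω - e i ω) - a)) -
        (f (a * (T ω - e i ω) + a) - f (a * (T ω - e i ω) - a))) := by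
    rw [Finset.sum_sub_distrib, h1]
    simp_rw [mul_assoc]
    rw [← Finset.mul_sum, h2, Finset.mul_sum, ← Finset.sum_sub_distrib]
    refine Finset.sum_congr rfl fun ω _ => ?_
    rw [Finset.mul_sum, ← Finset.sum_sub_distrib]
    refine Finset.sum_congr rfl fun i _ => ?_
    simp only [mul_add, mul_sub, mul_one, hT]
    ring
  have hterm (ω : Ω) (i : ι) : |a / 2 *
      (a * (f₁ (a * (T ω - e i ω) + a) + f₁ (a * (T ω - e i ω) - a)) -
        (f (a * (T ω - e i ω) + a) - f (a * (T ω - e i ω) - a)))| ≤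
      a ^ 4 * (A + B * (3 * a ^ 2 * T ω ^ 2 + 6 * a ^ 2)) := by
    have h := abs_trapezoid_sub_le hf hf₁ hf₂ (v := a * (T ω - e i ω))
      (L := A + B * (3 * a ^ 2 * T ω ^ 2 + 6 * a ^ 2)) ha.le fun u hu => by
        refine (hf₃ u).trans ?_
        have hu' : |u - a * T ω| ≤ 2 * a := by
          rw [abs_le] at hu ⊢
          rcases he i ω with h | h <;> rw [h] at hu <;> constructor <;> linarith [hu.1, hu.2]
        have h4 : (u - a * T ω) ^ 2 ≤ (2 * a) ^ 2 := sq_le_sq' (abs_le.1 hu').1 (abs_le.1 hu').2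
        have : u ^ 2 ≤ 3 * a ^ 2 * T ω ^ 2 + 6 * a ^ 2 := by
          nlinarith [sq_nonneg ((u - a * T ω) - 2 * (a * T ω))]
        gcongr
    rw [abs_mul, abs_of_pos (by positivity : 0 < a / 2)]
    refine (mul_le_mul_of_nonneg_left h (by positivity)).trans_eq ?_
    ring
  rw [h3]
  calc _ ≤ ∑ ω, ∑ _i : ι, a ^ 4 * (A + B * (3 * a ^ 2 * T ω ^ 2 + 6 * a ^ 2)) :=
        (Finset.abs_sum_le_sum_abs _ _).trans <| Finset.sum_le_sum fun ω _ =>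
          (Finset.abs_sum_le_sum_abs _ _).trans <| Finset.sum_le_sum fun i _ => hterm ω i
    _ = ∑ ω, (a ^ 2 * (A + 6 * B * a ^ 2) + 3 * a ^ 4 * B * T ω ^ 2) := by
        refine Finset.sum_congr rfl fun ω _ => ?_
        rw [Finset.sum_const, Finset.card_univ, nsmul_eq_mul]
        linear_combination (a ^ 2 * (A + B * (3 * a ^ 2 * T ω ^ 2 + 6 * a ^ 2))) * han
    _ = _ := by
        have hT2 : ∑ ω, T ω ^ 2 = _ := sum_sq_sum_sign he hσ
        rw [Finset.sum_add_distrib, Finset.sum_const, Finset.card_univ, nsmul_eq_mul,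
          ← Finset.mul_sum, hT2]
        linear_combination (3 * a ^ 2 * B * Fintype.card Ω) * han

end SignFlip

section FriedmanTwo

/-- The sign `±1` recording whether the `i`-th permutation fixes or swaps the two treatments. -/
def rankSign (n : ℕ) (i : Fin n) (ω : Fin n → Equiv.Perm (Fin 2)) : ℝ :=
  2 * ((ω i 0 : ℕ) : ℝ) - 1

/-- The involution of the sample space reversing the `i`-th permutation. -/
def rankFlip (n : ℕ) (i : Fin n) : Equiv.Perm (Fin n → Equiv.Perm (Fin 2)) :=
  Equiv.mulLeft (Pi.mulSingle i (Equiv.swap 0 1))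

lemma rankSign_eq_or (n : ℕ) (i : Fin n) (ω : Fin n → Equiv.Perm (Fin 2)) :
    rankSign n i ω = 1 ∨ rankSign n i ω = -1 := by
  unfold rankSign
  generalize ω i 0 = k
  fin_cases k <;> norm_num

lemma rankSign_rankFlip (n : ℕ) (i j : Fin n) (ω : Fin n → Equiv.Perm (Fin 2)) :
    rankSign n j (rankFlip n i ω) = if j = i then -rankSign n j ω else rankSign n j ω := by
  unfold rankSign rankFlip
  split_ifs with h
  · subst h
    simp only [Equiv.coe_mulLeft, Pi.mul_apply, Pi.mulSingle_eq_same, Equiv.Perm.mul_apply]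
    generalize ω j 0 = k
    fin_cases k <;> norm_num
  · simp [Pi.mulSingle_eq_of_ne h]

lemma friedman_two_eq {n : ℕ} (hn : 1 ≤ n) (ω : Fin n → Equiv.Perm (Fin 2)) :
    friedman n 2 ω = (1 / √(n : ℝ) * ∑ i, rankSign n i ω) ^ 2 := by
  have h0 (i : Fin n) : rho n 2 i 0 ω = 1 / 2 * rankSign n i ω := by
    simp only [rho, rankSign]; push_cast; ring
  have h1 (i : Fin n) : rho n 2 i 1 ω = -(1 / 2) * rankSign n i ω := by
    have h : ((ω i 1 : ℕ) : ℝ) = 1 - ((ω i 0 : ℕ) : ℝ) := by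
      have hne : ω i 0 ≠ ω i 1 := fun h => by simpa using (ω i).injective h
      revert hne
      generalize ω i 0 = k
      generalize ω i 1 = l
      fin_cases k <;> fin_cases l <;> norm_num
    simp only [rho, rankSign, h]; push_cast; ring
  have hn' : (0 : ℝ) < n := by exact_mod_cast hn
  simp only [friedman, Fin.sum_univ_two, Sstat, h0, h1, ← Finset.mul_sum, mul_pow, div_pow]
  rw [Real.sq_sqrt (by norm_num), Real.sq_sqrt (by positivity), Real.sq_sqrt (by positivity)]
  push_cast
  field_simp
  ring

lemma integral_friedmanMeasure (n r : ℕ) (F : (Fin n → Equiv.Perm (Fin r)) → ℝ) :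
    ∫ ω, F ω ∂(friedmanMeasure n r) =
      (Fintype.card (Fin n → Equiv.Perm (Fin r)) : ℝ)⁻¹ * ∑ ω, F ω := by
  have : MeasurableSingletonClass (Equiv.Perm (Fin r)) := ⟨fun _ => trivial⟩
  rw [friedmanMeasure, PMF.integral_eq_sum, Finset.mul_sum]
  simp [PMF.uniformOfFintype_apply]

end FriedmanTwo

lemma hasDerivAt_exp_neg_half_sq (w : ℝ) :
    HasDerivAt (fun w : ℝ => exp (-(1 / 2) * w ^ 2)) (-w * exp (-(1 / 2) * w ^ 2)) w := by
  convert! (((hasDerivAt_id' w).pow 2).const_mul (-(1 / 2) : ℝ)).exp using 1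
  simp only [Pi.pow_apply]
  ring

lemma tendsto_pow_mul_exp_neg_half_sq (k : ℕ) :
    Filter.Tendsto (fun w : ℝ => w ^ k * exp (-(1 / 2) * w ^ 2)) Filter.atTop (nhds 0) := by
  have h := (rpow_mul_exp_neg_mul_sq_isLittleO_exp_neg (b := 1 / 2) (by norm_num)
    k).tendsto_zero_of_tendsto (Real.tendsto_exp_atBot.comp
      (Filter.tendsto_id.const_mul_atTop_of_neg (by norm_num)))
  simpa only [Real.rpow_natCast] using h

lemma nonneg_of_deriv_nonpos_of_tendsto_zero {K K' : ℝ → ℝ} {w : ℝ}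
    (hK : ∀ x, HasDerivAt K (K' x) x) (hK' : ∀ x, w ≤ x → K' x ≤ 0)
    (hlim : Filter.Tendsto K Filter.atTop (nhds 0)) : 0 ≤ K w := by
  have hanti : AntitoneOn K (Set.Ici w) :=
    antitoneOn_of_hasDerivWithinAt_nonpos (convex_Ici w)
      (fun x _ => (hK x).continuousAt.continuousWithinAt)
      (fun x _ => (hK x).hasDerivWithinAt) fun x hx => hK' x (interior_subset hx)
  exact le_of_tendsto hlim (Filter.eventually_atTop.2
    ⟨w, fun x hx => hanti Set.self_mem_Ici hx hx⟩)

lemma nonneg_of_deriv_eq_neg_monotone_mul {K p q : ℝ → ℝ}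
    (hK : ∀ x, HasDerivAt K (-(p x * q x)) x) (hq : ∀ x, 0 ≤ q x)
    (hp : MonotoneOn p (Set.Ici 0)) (h0 : K 0 = 0)
    (hlim : Filter.Tendsto K Filter.atTop (nhds 0)) {w : ℝ} (hw : 0 ≤ w) : 0 ≤ K w := by
  rcases le_total (p w) 0 with h | h
  · have hmono : MonotoneOn K (Set.Icc 0 w) :=
      monotoneOn_of_hasDerivWithinAt_nonneg (convex_Icc 0 w)
        (fun x _ => (hK x).continuousAt.continuousWithinAt)
        (fun x _ => (hK x).hasDerivWithinAt) fun x hx => by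
          have hx' := interior_subset hx
          exact neg_nonneg.2 (mul_nonpos_of_nonpos_of_nonneg
            ((hp hx'.1 hw hx'.2).trans h) (hq x))
    exact h0 ▸ hmono (Set.left_mem_Icc.2 hw) (Set.right_mem_Icc.2 hw) hw
  · exact nonneg_of_deriv_nonpos_of_tendsto_zero hK (fun x hx => neg_nonpos.2
      (mul_nonneg (h.trans (hp hw (hw.trans hx) hx)) (hq x))) hlim

lemma abs_le_add_mul_of_deriv_bounded {h h' : ℝ → ℝ} {C : ℝ}
    (hd : ∀ x ∈ Set.Ici (0 : ℝ), HasDerivAt h (h' x) x)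
    (hb : ∀ x ∈ Set.Ici (0 : ℝ), |h' x| ≤ C) {x : ℝ} (hx : 0 ≤ x) :
    |h x| ≤ |h 0| + C * x := by
  have := (convex_Ici (0 : ℝ)).norm_image_sub_le_of_norm_hasDerivWithin_le
    (fun x hx => (hd x hx).hasDerivWithinAt) hb Set.self_mem_Ici hx
  simp only [Real.norm_eq_abs, sub_zero, abs_of_nonneg hx] at this
  linarith [abs_sub_abs_le_abs_sub (h x) (h 0)]

lemma integrable_gaussian_mul_comp_sq {h h' : ℝ → ℝ} {C : ℝ}
    (hd : ∀ x ∈ Set.Ici (0 : ℝ), HasDerivAt h (h' x) x)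
    (hb : ∀ x ∈ Set.Ici (0 : ℝ), |h' x| ≤ C) :
    Integrable fun w : ℝ => h (w ^ 2) * exp (-(1 / 2) * w ^ 2) := by
  have h1 := integrable_exp_neg_mul_sq (b := 1 / 2) (by norm_num)
  have h2 := integrable_rpow_mul_exp_neg_mul_sq (b := 1 / 2) (by norm_num) (s := (2 : ℕ))
    (by norm_num)
  simp only [Real.rpow_natCast] at h2
  have hc : Continuous fun w : ℝ => h (w ^ 2) := continuous_iff_continuousAt.2 fun w =>
    ContinuousAt.comp (f := fun w : ℝ => w ^ 2) (hd _ (sq_nonneg w)).continuousAt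
      (by fun_prop)
  refine ((h1.const_mul |h 0|).add (h2.const_mul C)).mono'
    (hc.mul (by fun_prop)).aestronglyMeasurable (Filter.Eventually.of_forall fun w => ?_)
  have := abs_le_add_mul_of_deriv_bounded hd hb (sq_nonneg w)
  simp only [Real.norm_eq_abs, abs_mul, Real.abs_exp, Pi.add_apply]
  calc _ ≤ (|h 0| + C * w ^ 2) * exp (-(1 / 2) * w ^ 2) := by gcongr
    _ = _ := by ring

lemma setIntegral_Ioi_exp_neg_half_sq :
    ∫ w in Set.Ioi (0 : ℝ), exp (-(1 / 2) * w ^ 2) = (√(2 / π))⁻¹ := by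
  rw [integral_gaussian_Ioi, ← Real.sqrt_inv, div_eq_iff two_ne_zero,
    Real.sqrt_eq_iff_mul_self_eq_of_pos (by positivity), mul_mul_mul_comm,
    Real.mul_self_sqrt (by positivity), inv_div]
  ring

lemma integral_chiSq_one (h : ℝ → ℝ) :
    ∫ x, h x ∂(chiSq 1) =
      √(2 / π) * ∫ w in Set.Ioi (0 : ℝ), h (w ^ 2) * exp (-(1 / 2) * w ^ 2) := by
  have hpdf (x : ℝ) : (ProbabilityTheory.gammaPDF (((1 : ℕ) : ℝ) / 2) (1 / 2) x).toReal =
      ProbabilityTheory.gammaPDFReal (1 / 2) (1 / 2) x := by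
    rw [Nat.cast_one, ProbabilityTheory.gammaPDF, ENNReal.toReal_ofReal
      (ProbabilityTheory.gammaPDFReal_nonneg (by norm_num) (by norm_num) _)]
  rw [chiSq, ProbabilityTheory.gammaMeasure, integral_withDensity_eq_integral_toReal_smul
    (f := ProbabilityTheory.gammaPDF _ _) (ProbabilityTheory.measurable_gammaPDFReal _ _).ennreal_ofReal
    (Filter.Eventually.of_forall fun x => ENNReal.ofReal_lt_top)]
  simp_rw [hpdf]
  rw [← setIntegral_eq_integral_of_forall_compl_eq_zero (s := Set.Ici 0),
    integral_Ici_eq_integral_Ioi, ← integral_comp_rpow_Ioi_of_pos (p := 2) (by norm_num),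
    ← integral_const_mul]
  · refine setIntegral_congr_fun measurableSet_Ioi fun w hw => ?_
    have hw0 : (0 : ℝ) < w := hw
    have e1 : (w ^ 2) ^ ((1 / 2 : ℝ) - 1) = w⁻¹ := by
      rw [← Real.rpow_natCast_mul hw0.le, ← Real.rpow_neg_one]
      norm_num
    have e2 : (2 : ℝ) * √(1 / 2) / √π = √(2 / π) := by
      rw [Real.sqrt_div' _ Real.pi_pos.le]
      have : (2 : ℝ) = √2 * √2 := (Real.mul_self_sqrt (by norm_num)).symm
      rw [Real.sqrt_div' _ (by norm_num), Real.sqrt_one]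
      field_simp
      linarith
    simp only [smul_eq_mul, Real.rpow_two, ProbabilityTheory.gammaPDFReal]
    rw [if_pos (sq_nonneg w), e1, ← e2, Real.Gamma_one_half_eq, ← Real.sqrt_eq_rpow,
      (by norm_num : (2 : ℝ) - 1 = 1), Real.rpow_one, neg_mul]
    field_simp
  · intro x hx
    simp only [ProbabilityTheory.gammaPDFReal]
    rw [if_neg (by simpa using hx), zero_smul]

/-- The even function `w ↦ h (w ^ 2)`, centred by its Gaussian mean, has a three times
differentiable solution of the normal Stein equation whose third derivative grows at most
quadratically, with constants depending only on the bounds for the derivatives of `h`. -/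
theorem exists_stein_solution_comp_sq {h h' h'' : ℝ → ℝ}
    (hd1 : ∀ x ∈ Set.Ici (0 : ℝ), HasDerivAt h (h' x) x)
    (hd2 : ∀ x ∈ Set.Ici (0 : ℝ), HasDerivAt h' (h'' x) x) {C1 C2 : ℝ}
    (hb1 : ∀ x ∈ Set.Ici (0 : ℝ), |h' x| ≤ C1)
    (hb2 : ∀ x ∈ Set.Ici (0 : ℝ), |h'' x| ≤ C2) {m : ℝ}
    (hm : ∫ w in Set.Ioi (0 : ℝ), (h (w ^ 2) - m) * exp (-(1 / 2) * w ^ 2) = 0) :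
    ∃ f f₁ f₂ f₃ : ℝ → ℝ, (∀ w, HasDerivAt f (f₁ w) w) ∧ (∀ w, HasDerivAt f₁ (f₂ w) w) ∧
      (∀ w, HasDerivAt f₂ (f₃ w) w) ∧ (∀ w, f₁ w - w * f w = h (w ^ 2) - m) ∧
      ∀ w, |f₃ w| ≤ 8 * C1 + (6 * C1 + 4 * C2) * w ^ 2 := by
  have hC1 : 0 ≤ C1 := (abs_nonneg _).trans (hb1 0 Set.self_mem_Ici)
  set φ : ℝ → ℝ := fun w => exp (-(1 / 2) * w ^ 2) with hφ
  set g : ℝ → ℝ := fun w => h (w ^ 2) - m with hg_def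
  set g₁ : ℝ → ℝ := fun w => h' (w ^ 2) * (2 * w) with hg₁_def
  set g₂ : ℝ → ℝ := fun w => h'' (w ^ 2) * (2 * w) ^ 2 + h' (w ^ 2) * 2 with hg₂_def
  have hsq (w : ℝ) : HasDerivAt (fun w : ℝ => w ^ 2) (2 * w) w := by
    simpa using hasDerivAt_pow 2 w
  have hφ' (w : ℝ) : HasDerivAt φ (-w * φ w) w := hasDerivAt_exp_neg_half_sq w
  have hφpos (w : ℝ) : 0 < φ w := Real.exp_pos _
  have hφlim (k : ℕ) : Filter.Tendsto (fun w => w ^ k * φ w) Filter.atTop (nhds 0) :=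
    tendsto_pow_mul_exp_neg_half_sq k
  have hφlim₀ : Filter.Tendsto φ Filter.atTop (nhds 0) := by simpa using hφlim 0
  have hφeven (w : ℝ) : φ (-w) = φ w := by simp [hφ]
  have hg (w : ℝ) : HasDerivAt g (g₁ w) w :=
    (HasDerivAt.comp (h := fun w => w ^ 2) w (hd1 (w ^ 2) (sq_nonneg w)) (hsq w)).sub_const m
  have hg₁ (w : ℝ) : HasDerivAt g₁ (g₂ w) w := by
    convert! (HasDerivAt.comp (h := fun w => w ^ 2) w (hd2 (w ^ 2) (sq_nonneg w)) (hsq w)).mul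
      ((hasDerivAt_id' w).const_mul 2) using 1
    simp only [hg₂_def, Function.comp]
    ring
  have hgeven (w : ℝ) : g (-w) = g w := by simp [hg_def]
  have hg₁_le (w : ℝ) : |g₁ w| ≤ 2 * C1 * |w| := by
    rw [hg₁_def, abs_mul, abs_mul, abs_two]
    nlinarith [hb1 (w ^ 2) (sq_nonneg w), abs_nonneg w]
  have hg₂_le (w : ℝ) : |g₂ w| ≤ 2 * C1 + 4 * C2 * w ^ 2 := by
    refine (abs_add_le _ _).trans ?_
    rw [abs_mul, abs_mul, abs_of_nonneg (sq_nonneg (2 * w)), abs_two]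
    nlinarith [hb1 (w ^ 2) (sq_nonneg w),
      mul_le_mul_of_nonneg_right (hb2 (w ^ 2) (sq_nonneg w)) (sq_nonneg (2 * w))]
  have hgc : Continuous g := continuous_iff_continuousAt.2 fun w => (hg w).continuousAt
  have hφc : Continuous φ := continuous_iff_continuousAt.2 fun w => (hφ' w).continuousAt
  have hgφint : Integrable fun w => g w * φ w :=
    integrable_gaussian_mul_comp_sq (fun x hx => (hd1 x hx).sub_const m) hb1
  have hgφlim : Filter.Tendsto (fun w => g w * φ w) Filter.atTop (nhds 0) := by
    have hlim : Filter.Tendsto (fun w : ℝ => |h 0 - m| * φ w + C1 * (w ^ 2 * φ w))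
        Filter.atTop (nhds 0) := by
      simpa using (hφlim₀.const_mul |h 0 - m|).add
        ((hφlim 2).const_mul C1)
    refine squeeze_zero_norm (fun w => ?_) hlim
    have := abs_le_add_mul_of_deriv_bounded (fun x hx => (hd1 x hx).sub_const m) hb1
      (sq_nonneg w)
    rw [Real.norm_eq_abs, abs_mul, abs_of_pos (hφpos w)]
    nlinarith [hφpos w]
  set J : ℝ → ℝ := fun w => ∫ u in (0 : ℝ)..w, g u * φ u with hJ_def
  have hJ (w : ℝ) : HasDerivAt J (g w * φ w) w :=
    intervalIntegral.integral_hasDerivAt_right ((hgc.mul hφc).intervalIntegrable _ _)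
      ((hgc.mul hφc).stronglyMeasurableAtFilter _ _) (hgc.mul hφc).continuousAt
  have hJ0 : J 0 = 0 := by simp [hJ_def]
  have hJodd (w : ℝ) : J (-w) = -J w := by
    have := intervalIntegral.integral_comp_neg (a := 0) (b := w) fun u => g u * φ u
    simp only [hgeven, hφeven, neg_zero] at this
    simp only [hJ_def, this]
    rw [intervalIntegral.integral_symm]
  have hJlim : Filter.Tendsto J Filter.atTop (nhds 0) := by
    rw [← hm]
    exact intervalIntegral_tendsto_integral_Ioi 0 hgφint.integrableOn Filter.tendsto_id
  have hJ_le (w : ℝ) (hw : 0 ≤ w) : |J w| ≤ C1 * (w * φ w) := by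
    have hlin : Filter.Tendsto (fun w : ℝ => C1 * (w * φ w)) Filter.atTop (nhds 0) := by
      simpa using (hφlim 1).const_mul C1
    have hwφ (x : ℝ) : HasDerivAt (fun w => C1 * (w * φ w)) (C1 * (1 - x ^ 2) * φ x) x := by
      convert! ((hasDerivAt_id' x).mul (hφ' x)).const_mul C1 using 1
      ring
    have hbound (x : ℝ) (hx : 0 ≤ x) : |g₁ x| ≤ C1 * (2 * x) := by
      have := hg₁_le x
      rw [abs_of_nonneg hx] at this
      linarith
    have hmono (s : ℝ) (hs : |s| = 1) :
        MonotoneOn (fun x => C1 * x ^ 2 - C1 + s * g x) (Set.Ici 0) := by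
      have hder (x : ℝ) : HasDerivAt (fun x => C1 * x ^ 2 - C1 + s * g x)
          (C1 * (2 * x) + s * g₁ x) x :=
        (((hsq x).const_mul C1).sub_const C1).add ((hg x).const_mul s)
      refine monotoneOn_of_hasDerivWithinAt_nonneg (convex_Ici 0)
        (fun x _ => (hder x).continuousAt.continuousWithinAt)
        (fun x _ => (hder x).hasDerivWithinAt) fun x hx => ?_
      have h1 := hbound x (interior_subset hx)
      have h2 : |s * g₁ x| = |g₁ x| := by rw [abs_mul, hs, one_mul]
      linarith [neg_abs_le (s * g₁ x)]
    have hK (s : ℝ) (hs : |s| = 1) : 0 ≤ C1 * (w * φ w) - s * J w := by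
      refine nonneg_of_deriv_eq_neg_monotone_mul (K := fun w => C1 * (w * φ w) - s * J w)
        (q := φ) (fun x => ?_) (fun x => (hφpos x).le) (hmono s hs) (by simp [hJ0])
        (by simpa using hlin.sub (hJlim.const_mul s)) hw
      convert! (hwφ x).sub ((hJ x).const_mul s) using 1
      ring
    have h1 := hK 1 (by simp)
    have h2 := hK (-1) (by simp)
    rw [abs_le]
    constructor <;> linarith
  set f : ℝ → ℝ := fun w => J w / φ w with hf_def
  set f₁ : ℝ → ℝ := fun w => w * f w + g w with hf₁_def
  set f₂ : ℝ → ℝ := fun w => f w + w * f₁ w + g₁ w with hf₂_def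
  set f₃ : ℝ → ℝ := fun w => 2 * f₁ w + w * f₂ w + g₂ w with hf₃_def
  have hf (w : ℝ) : HasDerivAt f (f₁ w) w := by
    convert! (hJ w).div (hφ' w) (hφpos w).ne' using 1
    have := (hφpos w).ne'
    simp only [hf₁_def, hf_def]
    field_simp
    ring
  have hf₁ (w : ℝ) : HasDerivAt f₁ (f₂ w) w := by
    convert! ((hasDerivAt_id' w).mul (hf w)).add (hg w) using 1
    simp only [hf₂_def]
    ring
  have hf₂ (w : ℝ) : HasDerivAt f₂ (f₃ w) w := by
    convert! ((hf w).add ((hasDerivAt_id' w).mul (hf₁ w))).add (hg₁ w) using 1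
    simp only [hf₃_def]
    ring
  have hfodd (w : ℝ) : f (-w) = -f w := by simp only [hf_def, hJodd, hφeven, neg_div]
  have hf₁even (w : ℝ) : f₁ (-w) = f₁ w := by simp only [hf₁_def, hfodd, hgeven]; ring
  have hf_le' (w : ℝ) (hw : 0 ≤ w) : |f w| ≤ C1 * w := by
    rw [hf_def, abs_div, abs_of_pos (hφpos w), div_le_iff₀ (hφpos w), mul_assoc]
    exact hJ_le w hw
  have hf_le (w : ℝ) : |f w| ≤ C1 * |w| := by
    rcases le_total 0 w with hw | hw
    · simpa [abs_of_nonneg hw] using hf_le' w hw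
    · simpa [abs_of_nonpos hw, hfodd] using hf_le' (-w) (by linarith)
  have hD_eq (w : ℝ) : f₁ w * φ w = w * J w + g w * φ w := by
    have := (hφpos w).ne'
    simp only [hf₁_def, hf_def]
    field_simp
  have hDlim : Filter.Tendsto (fun w => f₁ w * φ w) Filter.atTop (nhds 0) := by
    simp only [hD_eq]
    have h1 : Filter.Tendsto (fun w => w * J w) Filter.atTop (nhds 0) := by
      have hlim : Filter.Tendsto (fun w : ℝ => C1 * (w ^ 2 * φ w)) Filter.atTop (nhds 0) := by
        simpa using (hφlim 2).const_mul C1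
      refine squeeze_zero_norm' ?_ hlim
      filter_upwards [Filter.eventually_ge_atTop 0] with w hw
      rw [Real.norm_eq_abs, abs_mul, abs_of_nonneg hw]
      calc w * |J w| ≤ w * (C1 * (w * φ w)) := mul_le_mul_of_nonneg_left (hJ_le w hw) hw
        _ = _ := by ring
    simpa using h1.add hgφlim
  have hD (w : ℝ) : HasDerivAt (fun w => f₁ w * φ w) ((f w + g₁ w) * φ w) w := by
    convert! (hf₁ w).mul (hφ' w) using 1
    simp only [hf₂_def]
    ring
  have hf₁_le' (w : ℝ) (hw : 0 ≤ w) : |f₁ w| ≤ 3 * C1 := by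
    have hK (s : ℝ) (hs : |s| = 1) : 0 ≤ 3 * C1 * φ w - s * (f₁ w * φ w) := by
      refine nonneg_of_deriv_nonpos_of_tendsto_zero
        (K := fun w => 3 * C1 * φ w - s * (f₁ w * φ w))
        (fun x => ((hφ' x).const_mul (3 * C1)).sub ((hD x).const_mul s)) (fun x hx => ?_)
        (by simpa using (hφlim₀.const_mul (3 * C1)).sub (hDlim.const_mul s))
      have hx0 := hw.trans hx
      have h1 := hf_le x
      have h2 := hg₁_le x
      rw [abs_of_nonneg hx0] at h1 h2
      have h3 : |s * (f x + g₁ x)| ≤ 3 * C1 * x := by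
        rw [abs_mul, hs, one_mul]
        linarith [abs_add_le (f x) (g₁ x)]
      nlinarith [neg_abs_le (s * (f x + g₁ x)), hφpos x]
    have h1 := hK 1 (by simp)
    have h2 := hK (-1) (by simp)
    rw [abs_le]
    constructor <;> refine le_of_mul_le_mul_right ?_ (hφpos w) <;> linarith
  have hf₁_le (w : ℝ) : |f₁ w| ≤ 3 * C1 := by
    rcases le_total 0 w with hw | hw
    · exact hf₁_le' w hw
    · simpa [hf₁even] using hf₁_le' (-w) (by linarith)
  refine ⟨f, f₁, f₂, f₃, hf, hf₁, hf₂, fun w => by simp only [hf₁_def]; ring, fun w => ?_⟩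
  have h2 : |f₂ w| ≤ 6 * C1 * |w| := by
    have h3 : |w * f₁ w| ≤ 3 * C1 * |w| := by
      rw [abs_mul, mul_comm]
      exact mul_le_mul_of_nonneg_right (hf₁_le w) (abs_nonneg w)
    linarith [abs_add_three (f w) (w * f₁ w) (g₁ w), hf_le w, hg₁_le w]
  have h3 : |w * f₂ w| ≤ 6 * C1 * w ^ 2 := by
    rw [abs_mul, ← sq_abs w]
    nlinarith [abs_nonneg w]
  have h4 : |2 * f₁ w| ≤ 6 * C1 := by
    rw [abs_mul, abs_two]
    linarith [hf₁_le w]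
  linarith [abs_add_three (2 * f₁ w) (w * f₂ w) (g₂ w), hg₂_le w]

/-- **Proposition 1.4, (1.6) (Gaunt–Reinert).** For `n ≥ 1` and `h ∈ C_b^{1,2}(ℝ⁺)`
(twice differentiable on `[0,∞)` with bounded first and second derivatives),
`|E[h(F_2)] − χ²_{(1)}h| ≤ (1/n)(69 + 43/n)(‖h'‖ + ‖h''‖)`. -/
theorem friedman_two_smooth_test_function_bound (n : ℕ) (hn : 1 ≤ n)
    (h h' h'' : ℝ → ℝ)
    (hd1 : ∀ x ∈ Set.Ici (0 : ℝ), HasDerivAt h (h' x) x)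
    (hd2 : ∀ x ∈ Set.Ici (0 : ℝ), HasDerivAt h' (h'' x) x)
    (C1 C2 : ℝ)
    (hb1 : ∀ x ∈ Set.Ici (0 : ℝ), |h' x| ≤ C1)
    (hb2 : ∀ x ∈ Set.Ici (0 : ℝ), |h'' x| ≤ C2) :
    |(∫ ω, h (friedman n 2 ω) ∂(friedmanMeasure n 2)) - ∫ x, h x ∂(chiSq 1)|
      ≤ 1 / (n : ℝ) * (69 + 43 / n) * (C1 + C2) := by
  have hn' : (0 : ℝ) < n := by exact_mod_cast hn
  have hC1 : 0 ≤ C1 := (abs_nonneg _).trans (hb1 0 Set.self_mem_Ici)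
  have hC2 : 0 ≤ C2 := (abs_nonneg _).trans (hb2 0 Set.self_mem_Ici)
  set m := ∫ x, h x ∂(chiSq 1) with hm_def
  have hm : ∫ w in Set.Ioi (0 : ℝ), (h (w ^ 2) - m) * exp (-(1 / 2) * w ^ 2) = 0 := by
    simp_rw [sub_mul]
    rw [integral_sub (integrable_gaussian_mul_comp_sq hd1 hb1).integrableOn
      ((integrable_exp_neg_mul_sq (by norm_num)).const_mul m).integrableOn,
      integral_const_mul, setIntegral_Ioi_exp_neg_half_sq, hm_def, integral_chiSq_one]
    have : √(2 / π) ≠ 0 := by positivity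
    field_simp
    ring
  obtain ⟨f, f₁, f₂, f₃, hf, hf₁, hf₂, hstein, hf₃⟩ :=
    exists_stein_solution_comp_sq hd1 hd2 hb1 hb2 hm
  have ha2 : (1 / √(n : ℝ)) ^ 2 = 1 / n := by rw [div_pow, one_pow, Real.sq_sqrt hn'.le]
  have hbound := abs_sum_stein_le (rankSign_eq_or n) (rankSign_rankFlip n) hf hf₁ hf₂
    (by positivity) hf₃ (a := 1 / √(n : ℝ)) (by positivity)
    (by rw [ha2, Fintype.card_fin]; field_simp)
  simp only [hstein, ← friedman_two_eq hn, ha2] at hbound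
  have hcard : (0 : ℝ) < Fintype.card (Fin n → Equiv.Perm (Fin 2)) := by
    exact_mod_cast Fintype.card_pos
  rw [Finset.sum_sub_distrib, Finset.sum_const, Finset.card_univ, nsmul_eq_mul] at hbound
  rw [integral_friedmanMeasure]
  rw [inv_mul_eq_div, div_sub' hcard.ne', abs_div, abs_of_pos hcard, div_le_iff₀ hcard]
  refine hbound.trans ?_
  rw [mul_comm]
  refine mul_le_mul_of_nonneg_right ?_ hcard.le
  have hn0 : 0 ≤ 1 / (n : ℝ) := by positivity
  rw [mul_assoc, (by ring : (43 : ℝ) / n = 43 * (1 / n))]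
  refine mul_le_mul_of_nonneg_left ?_ hn0
  nlinarith [mul_nonneg hC1 hn0, mul_nonneg hC2 hn0]
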